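/- Let F_1, F_2, … be a uniformly attracting sequence of correctly ordered automorphisms of ℂ², and write F_n(x, y) = (λ_n x, μ_n y + a_n x) + (terms of order ≥ 2), so that F_n′(0) is lower triangular with diagonal entries λ_n, μ_n. Then there exist a bounded sequence of complex numbers d_1, d_2, …, a constant C > 0, and a sequence X_0, X_1, … of polynomial maps of ℂ² of the form X_n = identity + (homogeneous quadratic terms) with all coefficients uniformly bounded, such that, setting G_n(x, y) = (λ_n x, μ_n y + a_n x + d_n x²), one has ‖G_n(X_{n−1}(z)) − X_n(F_n(z))‖ ≤ C‖z‖³ for every n ≥ 1 and every z in the open unit ball of ℂ². -/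

import Mathlib

open Metric Filter Topology

noncomputable section

/-- `ℂ^k` with the Euclidean norm. -/
abbrev Ck (k : ℕ) := EuclideanSpace ℂ (Fin k)

/-- Build a point of `ℂ²` from its two coordinates. -/
def mk2 (x y : ℂ) : Ck 2 := (WithLp.equiv 2 (∀ _ : Fin 2, ℂ)).symm ![x, y]

/-- An automorphism of `ℂ²`: a bijective holomorphic map with holomorphic inverse. -/
def IsAutomorphism (F : Ck 2 → Ck 2) : Prop :=
  Differentiable ℂ F ∧ ∃ Finv : Ck 2 → Ck 2, Differentiable ℂ Finv ∧
    Function.LeftInverse Finv F ∧ Function.RightInverse Finv F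

/-- The matrix of the derivative of `F` at `0` in the standard basis. -/
def derivMatrix (F : Ck 2 → Ck 2) : Matrix (Fin 2) (Fin 2) ℂ :=
  fun i j => fderiv ℂ F 0 (EuclideanSpace.single j 1) i

/-- `F` is in lower triangular form: `F'(0)` is lower triangular. -/
def LowerTriAtZero (F : Ck 2 → Ck 2) : Prop :=
  ∀ i j : Fin 2, i < j → derivMatrix F i j = 0

/-- `F` is correctly ordered: `F'(0)` is lower triangular with diagonal entries
`λ_1, …, λ_k` satisfying `|λ_j||λ_i| < |λ_l|` whenever `l ≤ j`, for every `i`. -/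
def CorrectlyOrdered (F : Ck 2 → Ck 2) : Prop :=
  LowerTriAtZero F ∧
    ∀ l j i : Fin 2, l ≤ j →
      ‖derivMatrix F j j‖ * ‖derivMatrix F i i‖ < ‖derivMatrix F l l‖

/-- A sequence of correctly ordered automorphisms is uniformly attracting. -/
def UniformlyAttracting (F : ℕ → Ck 2 → Ck 2) : Prop :=
  ∃ a b : ℝ, 0 < a ∧ a < b ∧ b < 1 ∧
    (∀ n, ∀ z ∈ ball (0 : Ck 2) 1, a * ‖z‖ ≤ ‖F n z‖ ∧ ‖F n z‖ ≤ b * ‖z‖) ∧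
    ∃ ξ : ℝ, ξ < 1 ∧ ∀ n, ∀ l j i : Fin 2, l ≤ j →
      ‖derivMatrix (F n) i i‖ * ‖derivMatrix (F n) j j‖ ≤ ξ * ‖derivMatrix (F n) l l‖

/-- The quadratic map `X(x,y) = (x + α y² + β xy + γ x², y + δ y² + ε xy + ζ x²)`. -/
def quadMap (al be ga de ep ze : ℂ) (z : Ck 2) : Ck 2 :=
  mk2 (z 0 + al * (z 1) ^ 2 + be * (z 0 * z 1) + ga * (z 0) ^ 2)
      (z 1 + de * (z 1) ^ 2 + ep * (z 0 * z 1) + ze * (z 0) ^ 2)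

/-- The lower triangular map `G(x,y) = (λ x, μ y + a x + d x²)`. -/
def lowerG (lam mu a d : ℂ) (z : Ck 2) : Ck 2 :=
  mk2 (lam * z 0) (mu * z 1 + a * z 0 + d * (z 0) ^ 2)

/-
By Cauchy estimates, the quadratic Taylor terms `Q_n` of `F_n` are uniformly bounded and the cubic
remainders are uniformly `O(‖z‖³)`. It therefore suffices to solve, with bounded coefficients, the
homological equation `L_n ∘ c_n + (0, d_n x²) = Q_n + c_{n+1} ∘ L_n`, where `L_n = F_n'(0)` and
`X_n = id + c_n`. This equation is triangular in the coefficients of `c_n`. Each of them except that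
of `x²` in the second component satisfies a backward recursion with multiplier `μ²/λ`, `μ` or `λ`,
of modulus at most `ξ < 1`, and so is a fixed point of a contraction on bounded sequences. The
remaining multiplier `λ²/μ` may be large; that coefficient is set to `0` and `d_n` takes up the
defect.
-/

section Taylor

variable {𝕜 E G : Type*} [RCLike 𝕜] [NormedAddCommGroup E] [NormedSpace 𝕜 E]
  [NormedAddCommGroup G] [NormedSpace 𝕜 G]

theorem isLittleO_sub_taylor_two {f : E → G} {f'' : E →L[𝕜] E →L[𝕜] G} {c : E}
    (hf : ∀ᶠ z in 𝓝 c, DifferentiableAt 𝕜 f z) (hf'' : HasFDerivAt (fderiv 𝕜 f) f'' c) :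
    (fun z ↦ f z - (f c + fderiv 𝕜 f c (z - c) + (2⁻¹ : 𝕜) • f'' (z - c) (z - c)))
      =o[𝓝 c] fun z ↦ ‖z - c‖ ^ 2 := by
  let _ : NormedSpace ℝ E := NormedSpace.restrictScalars ℝ 𝕜 E
  obtain ⟨r, hr, hball⟩ := Metric.eventually_nhds_iff_ball.1 hf
  have hsymm : ∀ v w, f'' v w = f'' w v :=
    second_derivative_symmetric_of_eventually (hf.mono fun z hz ↦ hz.hasFDerivAt) hf''
  have hderiv : ∀ z ∈ ball c r, HasFDerivWithinAt
      (fun z ↦ f z - (f c + fderiv 𝕜 f c (z - c) + (2⁻¹ : 𝕜) • f'' (z - c) (z - c)))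
      (fderiv 𝕜 f z - fderiv 𝕜 f c - f'' (z - c)) (ball c r) z := by
    intro z hz
    have hsub : HasFDerivAt (fun z : E ↦ z - c) (ContinuousLinearMap.id 𝕜 E) z :=
      (hasFDerivAt_id z).sub_const c
    have hlin := (fderiv 𝕜 f c).hasFDerivAt.comp z hsub
    have hquad := (f''.hasFDerivAt_of_bilinear hsub hsub).const_smul (2⁻¹ : 𝕜)
    refine ((hball z hz).hasFDerivAt.sub ((hlin.const_add (f c)).add hquad)).congr_fderiv ?_
      |>.hasFDerivWithinAt
    ext v
    generalize z - c = w
    simp [hsymm v w, ← add_smul, ← two_mul, sub_sub]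
  have hsmall : (fun z ↦ fderiv 𝕜 f z - fderiv 𝕜 f c - f'' (z - c))
      =o[𝓝[ball c r] c] fun z ↦ ‖z - c‖ ^ 1 := by
    simpa only [pow_one] using (hf''.isLittleO.norm_right).mono nhdsWithin_le_nhds
  have h := (convex_ball c r).isLittleO_pow_succ (mem_ball_self hr) hderiv hsmall
  rw [isOpen_ball.nhdsWithin_eq (mem_ball_self hr)] at h
  simpa using h

theorem norm_le_norm_apply_of_hasFDerivAt {f : E → G} {L : E →L[𝕜] G} {a : ℝ}
    (hL : HasFDerivAt f L 0) (h0 : f 0 = 0) (hf : ∀ᶠ z in 𝓝 0, a * ‖z‖ ≤ ‖f z‖) (v : E) :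
    a * ‖v‖ ≤ ‖L v‖ := by
  have hline : Tendsto (fun t : 𝕜 ↦ t • v) (𝓝[≠] 0) (𝓝 0) := by
    have h : Continuous fun t : 𝕜 ↦ t • v := by fun_prop
    simpa using (h.tendsto 0).mono_left nhdsWithin_le_nhds
  have hslope : Tendsto (fun t : 𝕜 ↦ t⁻¹ • f (t • v)) (𝓝[≠] 0) (𝓝 (L v)) := by
    simpa [h0] using (hL.hasLineDerivAt v).tendsto_slope_zero
  refine ge_of_tendsto hslope.norm ?_
  filter_upwards [hline.eventually hf, self_mem_nhdsWithin] with t ht ht0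
  rw [norm_smul, norm_inv, le_inv_mul_iff₀ (norm_pos_iff.2 ht0)]
  linarith [norm_smul t v ▸ ht]

theorem differentiableAt_of_forall_differentiableAt_apply {D : Type*} [NormedAddCommGroup D]
    [NormedSpace 𝕜 D] [FiniteDimensional 𝕜 E] {A : D → E →L[𝕜] G} {x : D}
    (h : ∀ v, DifferentiableAt 𝕜 (fun y ↦ A y v) x) : DifferentiableAt 𝕜 A x := by
  let e₁ : E ≃L[𝕜] (Fin (Module.finrank 𝕜 E) → 𝕜) := .ofFinrankEq (by simp)
  let e₂ := (e₁.arrowCongr (1 : G ≃L[𝕜] G)).trans (ContinuousLinearEquiv.piRing _)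
  rw [← e₂.comp_differentiableAt_iff, differentiableAt_pi]
  exact fun i ↦ h _

end Taylor

section Holomorphic

variable {E G : Type*} [NormedAddCommGroup E] [NormedSpace ℂ E]
  [NormedAddCommGroup G] [NormedSpace ℂ G]

section CauchyEstimates

variable {f : E → G} {c z : E} {R M : ℝ}

theorem norm_fderiv_le_of_norm_le_on_ball (hR : 0 < R)
    (hf : DifferentiableOn ℂ f (ball c R)) (hM : ∀ w ∈ ball c R, ‖f w‖ ≤ M) :
    ‖fderiv ℂ f c‖ ≤ 2 * M / R := by
  refine Complex.norm_fderiv_le_div_of_mapsTo_ball hf (fun w hw ↦ ?_) hR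
  rw [mem_closedBall, dist_eq_norm]
  linarith [norm_sub_le (f w) (f c), hM w hw, hM c (mem_ball_self hR)]

theorem norm_fderiv_apply_le_of_norm_le_on_ball (hf : DifferentiableOn ℂ f (ball c R))
    (hM : ∀ w ∈ ball c R, ‖f w‖ ≤ M) (hz : z ∈ ball c R) :
    ‖fderiv ℂ f c (z - c)‖ ≤ 2 * M := by
  have hR : 0 < R := nonempty_ball.1 ⟨z, hz⟩
  have hzR : ‖z - c‖ ≤ R := (mem_ball_iff_norm.1 hz).le
  calc ‖fderiv ℂ f c (z - c)‖ ≤ 2 * M / R * R :=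
        (fderiv ℂ f c).le_of_opNorm_le_of_le (norm_fderiv_le_of_norm_le_on_ball hR hf hM) hzR
    _ = 2 * M := div_mul_cancel₀ _ hR.ne'

theorem norm_le_mul_div_pow_of_isLittleO {n : ℕ} (hf : DifferentiableOn ℂ f (ball c R))
    (hM : ∀ w ∈ ball c R, ‖f w‖ ≤ M) (hc : f c = 0) (hn : f =o[𝓝 c] fun w ↦ ‖w - c‖ ^ n)
    (hz : z ∈ ball c R) : ‖f z‖ ≤ M * (‖z - c‖ / R) ^ (n + 1) := by
  have hmaps : Set.MapsTo f (ball c R) (closedBall (f c) M) := fun w hw ↦ by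
    simpa [hc] using hM w hw
  simpa [hc, dist_eq_norm] using
    Complex.dist_le_mul_div_pow_of_mapsTo_ball_of_isLittleO hf hmaps (by simpa [hc] using hn) hz

theorem norm_sub_taylor_one_le (hf : DifferentiableOn ℂ f (ball c R))
    (hM : ∀ w ∈ ball c R, ‖f w‖ ≤ M) (hz : z ∈ ball c R) :
    ‖f z - f c - fderiv ℂ f c (z - c)‖ ≤ 4 * M * (‖z - c‖ / R) ^ 2 := by
  have hR : 0 < R := nonempty_ball.1 ⟨z, hz⟩
  refine norm_le_mul_div_pow_of_isLittleO (f := fun w ↦ f w - f c - fderiv ℂ f c (w - c))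
    (n := 1) (by fun_prop) (fun w hw ↦ ?_) (by simp) ?_ hz
  · exact (norm_sub_le_of_le (norm_sub_le_of_le (hM w hw) (hM c (mem_ball_self hR)))
      (norm_fderiv_apply_le_of_norm_le_on_ball hf hM hw)).trans_eq (by ring)
  · have hfc := (hf.differentiableAt (ball_mem_nhds c hR)).hasFDerivAt
    simpa only [pow_one] using hfc.isLittleO.norm_right

end CauchyEstimates

section Weierstrass

variable {ι : Type*} {l : Filter ι} {F : ι → E → G} {g : E → G} {U : Set E}

theorem uniformCauchySeqOn_fderiv_of_tendstoUniformlyOn {s : Set E} {r : ℝ} (hr : 0 < r)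
    (hsU : ∀ z ∈ s, ball z r ⊆ U) (hF : ∀ᶠ n in l, DifferentiableOn ℂ (F n) U)
    (hFg : TendstoUniformlyOn F g l U) :
    UniformCauchySeqOn (fun n ↦ fderiv ℂ (F n)) l s := by
  intro u hu
  obtain ⟨ε, hε, hεu⟩ := Metric.mem_uniformity_dist.1 hu
  have hclose := hFg.uniformCauchySeqOn _
    (Metric.dist_mem_uniformity (by positivity : 0 < ε * r / 4))
  filter_upwards [hclose, hF.prod_mk hF] with ⟨m, n⟩ hmn ⟨hm, hn⟩ z hz
  have hdiff : ∀ k, DifferentiableOn ℂ (F k) U → DifferentiableAt ℂ (F k) z := fun k hk ↦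
    hk.differentiableAt (mem_of_superset (ball_mem_nhds z hr) (hsU z hz))
  refine hεu ?_
  calc dist (fderiv ℂ (F m) z) (fderiv ℂ (F n) z)
      = ‖fderiv ℂ (F m - F n) z‖ := by
        rw [dist_eq_norm, fderiv_sub (hdiff m hm) (hdiff n hn)]
    _ ≤ 2 * (ε * r / 4) / r :=
        norm_fderiv_le_of_norm_le_on_ball hr ((hm.sub hn).mono (hsU z hz)) fun w hw ↦ by
          simpa [dist_eq_norm] using (hmn w (hsU z hz hw)).le
    _ < ε := by field_simp; linarith

theorem differentiableOn_of_tendstoUniformlyOn [NeBot l] [CompleteSpace G] (hU : IsOpen U)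
    (hF : ∀ᶠ n in l, DifferentiableOn ℂ (F n) U) (hFg : TendstoUniformlyOn F g l U) :
    DifferentiableOn ℂ g U := by
  intro x hx
  obtain ⟨r, hr, hrU⟩ := Metric.isOpen_iff.1 hU x hx
  have hcauchy : UniformCauchySeqOn (fun n ↦ fderiv ℂ (F n)) l (ball x (r / 2)) :=
    uniformCauchySeqOn_fderiv_of_tendstoUniformlyOn (half_pos hr)
      (fun z hz ↦ (ball_subset_ball' (by linarith [mem_ball.1 hz])).trans hrU) hF hFg
  have hlim : ∀ z, ∃ g' : E →L[ℂ] G, z ∈ ball x (r / 2) →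
      Tendsto (fun n ↦ fderiv ℂ (F n) z) l (𝓝 g') := fun z ↦ by
    by_cases hz : z ∈ ball x (r / 2)
    · exact (cauchy_map_iff_exists_tendsto.1 (hcauchy.cauchy_map hz)).imp fun _ h _ ↦ h
    · exact ⟨0, fun h ↦ absurd h hz⟩
  choose g' hg' using hlim
  have hnhds : ball x (r / 2) ∈ 𝓝 x := ball_mem_nhds x (half_pos hr)
  have hunif := (hcauchy.tendstoUniformlyOn_of_tendsto hg').tendstoUniformlyOnFilter.mono_right
    (le_principal_iff.2 hnhds)
  have hF' : ∀ᶠ p : ι × E in l ×ˢ 𝓝 x, HasFDerivAt (F p.1) (fderiv ℂ (F p.1) p.2) p.2 := by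
    filter_upwards [hF.prod_mk (hU.mem_nhds hx)] with p ⟨hd, hp⟩
    exact (hd.differentiableAt (hU.mem_nhds hp)).hasFDerivAt
  have hptwise : ∀ᶠ z in 𝓝 x, Tendsto (fun n ↦ F n z) l (𝓝 (g z)) :=
    eventually_of_mem (hU.mem_nhds hx) fun z hz ↦ hFg.tendsto_at hz
  exact (hasFDerivAt_of_tendstoUniformlyOnFilter hunif hF' hptwise).differentiableAt
    |>.differentiableWithinAt

end Weierstrass

section SecondDerivative

variable {f : E → G}

theorem tendstoUniformlyOn_difference_quotient {s U : Set E} {r M : ℝ} (hr : 0 < r)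
    (hsU : ∀ z ∈ s, ball z r ⊆ U) (hf : DifferentiableOn ℂ f U)
    (hM : ∀ z ∈ U, ‖f z‖ ≤ M) (v : E) :
    TendstoUniformlyOn (fun (t : ℂ) z ↦ t⁻¹ • (f (z + t • v) - f z)) (fun z ↦ fderiv ℂ f z v)
      (𝓝[≠] 0) s := by
  rw [Metric.tendstoUniformlyOn_iff]
  intro ε hε
  have hsmall : ∀ᶠ t : ℂ in 𝓝[≠] 0, ‖t • v‖ < r ∧ 4 * M * (‖v‖ / r) ^ 2 * ‖t‖ < ε := by
    have hcont₁ : Continuous fun t : ℂ ↦ ‖t • v‖ := by fun_prop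
    have hcont₂ : Continuous fun t : ℂ ↦ 4 * M * (‖v‖ / r) ^ 2 * ‖t‖ := by fun_prop
    refine eventually_nhdsWithin_of_eventually_nhds (.and ?_ ?_)
    · exact (hcont₁.tendsto 0).eventually_lt_const (by simpa using hr)
    · exact (hcont₂.tendsto 0).eventually_lt_const (by simpa using hε)
  filter_upwards [hsmall, self_mem_nhdsWithin] with t ⟨htr, htε⟩ ht z hz
  have ht0 : t ≠ 0 := ht
  have hztv : z + t • v ∈ ball z r := by simpa [mem_ball_iff_norm] using htr
  have htaylor := norm_sub_taylor_one_le (hf.mono (hsU z hz)) (fun w hw ↦ hM w (hsU z hz hw)) hztv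
  rw [add_sub_cancel_left, map_smul] at htaylor
  refine lt_of_le_of_lt ?_ htε
  calc dist (fderiv ℂ f z v) (t⁻¹ • (f (z + t • v) - f z))
      = ‖t‖⁻¹ * ‖f (z + t • v) - f z - t • fderiv ℂ f z v‖ := by
        rw [dist_comm, dist_eq_norm, ← norm_inv, ← norm_smul, smul_sub _ _ (t • _),
          inv_smul_smul₀ ht0]
    _ ≤ ‖t‖⁻¹ * (4 * M * (‖t • v‖ / r) ^ 2) := by gcongr
    _ = 4 * M * (‖v‖ / r) ^ 2 * ‖t‖ := by
        have := norm_ne_zero_iff.2 ht0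
        rw [norm_smul]
        field_simp

theorem differentiableAt_fderiv_apply [CompleteSpace G] {c : E}
    (hf : ∀ᶠ z in 𝓝 c, DifferentiableAt ℂ f z) (v : E) :
    DifferentiableAt ℂ (fun z ↦ fderiv ℂ f z v) c := by
  have hbound : ∀ᶠ z in 𝓝 c, ‖f z‖ < ‖f c‖ + 1 :=
    hf.self_of_nhds.continuousAt.norm.eventually_lt_const (lt_add_one _)
  obtain ⟨R, hR, hball⟩ := Metric.eventually_nhds_iff_ball.1 (hf.and hbound)
  have hdiff : DifferentiableOn ℂ f (ball c R) := fun z hz ↦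
    (hball z hz).1.differentiableWithinAt
  have hthick : ∀ z ∈ ball c (R / 2), ball z (R / 2) ⊆ ball c R := fun z hz ↦
    ball_subset_ball' (by linarith [mem_ball.1 hz])
  have hquot : ∀ᶠ t : ℂ in 𝓝[≠] 0,
      DifferentiableOn ℂ (fun z ↦ t⁻¹ • (f (z + t • v) - f z)) (ball c (R / 2)) := by
    have hcont : Continuous fun t : ℂ ↦ ‖t • v‖ := by fun_prop
    filter_upwards [eventually_nhdsWithin_of_eventually_nhds <|
      (hcont.tendsto 0).eventually_lt_const
        (by simpa only [zero_smul, norm_zero] using half_pos hR)] with t ht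
    refine .const_smul (.sub (hdiff.comp (by fun_prop) fun z hz ↦ ?_)
      (hdiff.mono (ball_subset_ball (by linarith)))) _
    exact hthick z hz (by simpa [mem_ball_iff_norm] using ht)
  have hlim := tendstoUniformlyOn_difference_quotient (half_pos hR) hthick hdiff
    (fun z hz ↦ (hball z hz).2.le) v
  exact (differentiableOn_of_tendstoUniformlyOn isOpen_ball hquot hlim).differentiableAt
    (ball_mem_nhds c (half_pos hR))

variable [CompleteSpace G] [FiniteDimensional ℂ E]

theorem differentiableAt_fderiv {c : E} (hf : ∀ᶠ z in 𝓝 c, DifferentiableAt ℂ f z) :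
    DifferentiableAt ℂ (fderiv ℂ f) c :=
  differentiableAt_of_forall_differentiableAt_apply (differentiableAt_fderiv_apply hf)

theorem norm_fderiv_fderiv_le_of_norm_le_on_ball {c : E} {R M : ℝ} (hR : 0 < R)
    (hf : DifferentiableOn ℂ f (ball c R)) (hM : ∀ w ∈ ball c R, ‖f w‖ ≤ M) :
    ‖fderiv ℂ (fderiv ℂ f) c‖ ≤ 16 * M / R ^ 2 := by
  have hthick : ∀ z ∈ ball c (R / 2), ball z (R / 2) ⊆ ball c R := fun z hz ↦
    ball_subset_ball' (by linarith [mem_ball.1 hz])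
  have hf' : DifferentiableOn ℂ (fderiv ℂ f) (ball c (R / 2)) := fun z hz ↦
    (differentiableAt_fderiv <| hf.eventually_differentiableAt <|
      isOpen_ball.mem_nhds (hthick z hz (mem_ball_self (half_pos hR)))).differentiableWithinAt
  calc ‖fderiv ℂ (fderiv ℂ f) c‖ ≤ 2 * (2 * M / (R / 2)) / (R / 2) :=
        norm_fderiv_le_of_norm_le_on_ball (half_pos hR) hf' fun z hz ↦
          norm_fderiv_le_of_norm_le_on_ball (half_pos hR) (hf.mono (hthick z hz))
            fun w hw ↦ hM w (hthick z hz hw)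
    _ = 16 * M / R ^ 2 := by ring

theorem norm_fderiv_fderiv_apply_le_of_norm_le_on_ball {c z : E} {R M : ℝ}
    (hf : DifferentiableOn ℂ f (ball c R)) (hM : ∀ w ∈ ball c R, ‖f w‖ ≤ M)
    (hz : z ∈ ball c R) : ‖fderiv ℂ (fderiv ℂ f) c (z - c) (z - c)‖ ≤ 16 * M := by
  have hR : 0 < R := nonempty_ball.1 ⟨z, hz⟩
  have hzR : ‖z - c‖ ≤ R := (mem_ball_iff_norm.1 hz).le
  calc ‖fderiv ℂ (fderiv ℂ f) c (z - c) (z - c)‖ ≤ 16 * M / R ^ 2 * R * R :=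
        ContinuousLinearMap.le_of_opNorm_le_of_le _ (ContinuousLinearMap.le_of_opNorm_le_of_le _
          (norm_fderiv_fderiv_le_of_norm_le_on_ball hR hf hM) hzR) hzR
    _ = 16 * M := by field_simp

theorem norm_sub_taylor_two_le {c z : E} {R M : ℝ} (hf : DifferentiableOn ℂ f (ball c R))
    (hM : ∀ w ∈ ball c R, ‖f w‖ ≤ M) (hz : z ∈ ball c R) :
    ‖f z - (f c + fderiv ℂ f c (z - c) +
      (2⁻¹ : ℂ) • fderiv ℂ (fderiv ℂ f) c (z - c) (z - c))‖ ≤ 12 * M * (‖z - c‖ / R) ^ 3 := by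
  have hR : 0 < R := nonempty_ball.1 ⟨z, hz⟩
  refine norm_le_mul_div_pow_of_isLittleO (n := 2) (f := fun w ↦ f w - (f c +
    fderiv ℂ f c (w - c) + (2⁻¹ : ℂ) • fderiv ℂ (fderiv ℂ f) c (w - c) (w - c)))
    (by fun_prop) (fun w hw ↦ ?_) (by simp) ?_ hz
  · have hquad : ‖(2⁻¹ : ℂ) • fderiv ℂ (fderiv ℂ f) c (w - c) (w - c)‖ ≤ 8 * M := by
      rw [norm_smul, norm_inv, Complex.norm_two]
      linarith [norm_fderiv_fderiv_apply_le_of_norm_le_on_ball hf hM hw]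
    exact (norm_sub_le_of_le (hM w hw) (norm_add_le_of_le (norm_add_le_of_le
      (hM c (mem_ball_self hR)) (norm_fderiv_apply_le_of_norm_le_on_ball hf hM hw))
      hquad)).trans_eq (by ring)
  · have hev := hf.eventually_differentiableAt (ball_mem_nhds c hR)
    exact isLittleO_sub_taylor_two hev (differentiableAt_fderiv hev).hasFDerivAt

end SecondDerivative

end Holomorphic

section Homological

open BoundedContinuousFunction

/-- The degree two monomials `(y², xy, x²)` at `(x, y)`, in the order in which `quadMap` lists its
coefficients. -/
def quadMonomials {R : Type*} [CommRing R] (z : Fin 2 → R) : Fin 3 → R :=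
  ![z 1 ^ 2, z 0 * z 1, z 0 ^ 2]

/-- The symmetric square of a `2 × 2` matrix: the action of the linear substitution `A` on
`quadMonomials`. -/
def symSq {R : Type*} [CommRing R] (A : Matrix (Fin 2) (Fin 2) R) : Matrix (Fin 3) (Fin 3) R :=
  !![A 1 1 ^ 2, 2 * A 1 1 * A 1 0, A 1 0 ^ 2;
    A 0 1 * A 1 1, A 0 0 * A 1 1 + A 0 1 * A 1 0, A 0 0 * A 1 0;
    A 0 1 ^ 2, 2 * A 0 0 * A 0 1, A 0 0 ^ 2]

theorem quadMonomials_mulVec {R : Type*} [CommRing R] (A : Matrix (Fin 2) (Fin 2) R)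
    (z : Fin 2 → R) : quadMonomials (A.mulVec z) = (symSq A).mulVec (quadMonomials z) := by
  ext i
  fin_cases i <;> simp [quadMonomials, symSq, Matrix.mulVec_eq_sum, Fin.sum_univ_succ] <;> ring

theorem exists_mul_eq_add_mul_of_lipschitzWith_one {B : Type*} [NormedRing B] [CompleteSpace B]
    {S : B → B} (hS : LipschitzWith 1 S) {u k : B} (hu : IsUnit u) (hk : ‖k‖ < 1) (c : B) :
    ∃ x, u * x = c + u * k * S x := by
  obtain ⟨u, rfl⟩ := hu
  have hcontr : ContractingWith ‖k‖₊ fun x ↦ (↑u⁻¹ : B) * c + k * S x := by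
    refine ⟨hk, LipschitzWith.of_dist_le_mul fun x y ↦ ?_⟩
    calc dist (↑u⁻¹ * c + k * S x) (↑u⁻¹ * c + k * S y) = ‖k * (S x - S y)‖ := by
          rw [dist_add_left, dist_eq_norm, mul_sub]
      _ ≤ ‖k‖ * ‖S x - S y‖ := norm_mul_le _ _
      _ ≤ ‖k‖ * dist x y := by
          gcongr
          simpa [dist_eq_norm] using hS.dist_le_mul x y
  refine ⟨hcontr.fixedPoint, ?_⟩
  conv_lhs => rw [← hcontr.fixedPoint_isFixedPt]
  simp [mul_add, mul_assoc]

/- The coefficients decouple when solved in the order `y²`, `xy`, `x²`, the first component before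
the second; the contraction factors are `κ, μ, λ` in the first component and `μ, λ` in the second,
where `λ = A 0 0` and `μ = A 1 1`. -/
theorem exists_homological_solution {B : Type*} [NormedCommRing B] [CompleteSpace B] {S : B → B}
    (hS : LipschitzWith 1 S) {A : Matrix (Fin 2) (Fin 2) B} {κ : B} (hA : A 0 1 = 0)
    (hlam : IsUnit (A 0 0)) (hmu : IsUnit (A 1 1)) (hlam_lt : ‖A 0 0‖ < 1) (hmu_lt : ‖A 1 1‖ < 1)
    (hκ : A 0 0 * κ = A 1 1 ^ 2) (hκ_lt : ‖κ‖ < 1) (Q : Matrix (Fin 2) (Fin 3) B) :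
    ∃ (c : Matrix (Fin 2) (Fin 3) B) (d : B),
      A * c + Matrix.single 1 2 d = Q + c.map S * symSq A := by
  have solve {u k : B} := exists_mul_eq_add_mul_of_lipschitzWith_one hS (u := u) (k := k)
  obtain ⟨α, hα⟩ := solve hlam hκ_lt (Q 0 0)
  obtain ⟨β, hβ⟩ := solve hlam hmu_lt (Q 0 1 + 2 * S α * A 1 1 * A 1 0)
  obtain ⟨γ, hγ⟩ := solve hlam hlam_lt (Q 0 2 + S α * A 1 0 ^ 2 + S β * A 0 0 * A 1 0)
  obtain ⟨δ, hδ⟩ := solve hmu hmu_lt (Q 1 0 - A 1 0 * α)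
  obtain ⟨ε, hε⟩ := solve hmu hlam_lt (Q 1 1 + 2 * S δ * A 1 1 * A 1 0 - A 1 0 * β)
  refine ⟨!![α, β, γ; δ, ε, 0], Q 1 2 + S δ * A 1 0 ^ 2 + S ε * A 0 0 * A 1 0
    + S 0 * A 0 0 ^ 2 - A 1 0 * γ, ?_⟩
  ext i j
  fin_cases i <;> fin_cases j <;>
    simp [Matrix.mul_apply, Fin.sum_univ_succ, Matrix.single, symSq, hA]
  · linear_combination hα + S α * hκ
  · linear_combination hβ
  · linear_combination hγ
  · linear_combination hδ
  · linear_combination hε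
  · ring

theorem isUnit_of_forall_le_norm {X 𝕜 : Type*} [TopologicalSpace X] [NormedField 𝕜]
    {f : X →ᵇ 𝕜} {a : ℝ} (ha : 0 < a) (hf : ∀ x, a ≤ ‖f x‖) : IsUnit f := by
  have hne : ∀ x, f x ≠ 0 := fun x ↦ norm_pos_iff.1 (ha.trans_le (hf x))
  let g : X →ᵇ 𝕜 := .ofNormedAddCommGroup (fun x ↦ (f x)⁻¹) (f.continuous.inv₀ hne) a⁻¹ fun x ↦ by
    rw [norm_inv]
    exact inv_anti₀ ha (hf x)
  exact IsUnit.of_mul_eq_one g (by ext x; exact mul_inv_cancel₀ (hne x))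

theorem exists_bounded_homological_solution {𝕜 : Type*} [NormedField 𝕜] [CompleteSpace 𝕜]
    {A : ℕ → Matrix (Fin 2) (Fin 2) 𝕜} {Q : ℕ → Matrix (Fin 2) (Fin 3) 𝕜} {a ξ M K : ℝ}
    (ha : 0 < a) (hξ : ξ < 1) (hA : ∀ n, A n 0 1 = 0) (hAM : ∀ n i j, ‖A n i j‖ ≤ M)
    (hlow : ∀ n i, a ≤ ‖A n i i‖) (hup : ∀ n i, ‖A n i i‖ ≤ ξ)
    (hres : ∀ n, ‖A n 1 1‖ ^ 2 ≤ ξ * ‖A n 0 0‖) (hQ : ∀ n i j, ‖Q n i j‖ ≤ K) :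
    ∃ (c : ℕ → Matrix (Fin 2) (Fin 3) 𝕜) (d : ℕ → 𝕜) (N : ℝ),
      (∀ n i j, ‖c n i j‖ ≤ N) ∧ (∀ n, ‖d n‖ ≤ N) ∧
      ∀ n, A n * c n + Matrix.single 1 2 (d n) = Q n + c (n + 1) * symSq (A n) := by
  have hξ0 : 0 ≤ ξ := (norm_nonneg _).trans (hup 0 0)
  have hlam0 : ∀ n, A n 0 0 ≠ 0 := fun n ↦ norm_pos_iff.1 (ha.trans_le (hlow n 0))
  let Ab : Matrix (Fin 2) (Fin 2) (ℕ →ᵇ 𝕜) := .of fun i j ↦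
    ofNormedAddCommGroupDiscrete (fun n ↦ A n i j) M fun n ↦ hAM n i j
  let Qb : Matrix (Fin 2) (Fin 3) (ℕ →ᵇ 𝕜) := .of fun i j ↦
    ofNormedAddCommGroupDiscrete (fun n ↦ Q n i j) K fun n ↦ hQ n i j
  let κ : ℕ →ᵇ 𝕜 := ofNormedAddCommGroupDiscrete (fun n ↦ A n 1 1 ^ 2 / A n 0 0) ξ fun n ↦ by
    rw [norm_div, norm_pow]
    exact div_le_of_le_mul₀ (norm_nonneg _) hξ0 (hres n)
  let S : (ℕ →ᵇ 𝕜) → (ℕ →ᵇ 𝕜) := fun u ↦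
    u.compContinuous ⟨(· + 1), continuous_of_discreteTopology⟩
  have hdiag_lt : ∀ i, ‖Ab i i‖ < 1 := fun i ↦
    ((norm_le hξ0).2 fun n ↦ hup n i).trans_lt hξ
  have hκ_lt : ‖κ‖ < 1 := (norm_ofNormedAddCommGroup_le _ hξ0 _).trans_lt hξ
  have hκ : Ab 0 0 * κ = Ab 1 1 ^ 2 := by
    ext n
    exact mul_div_cancel₀ _ (hlam0 n)
  obtain ⟨c, d, hcd⟩ := exists_homological_solution (S := S) (lipschitz_compContinuous _)
    (A := Ab) (by ext n; exact hA n) (isUnit_of_forall_le_norm ha (hlow · 0))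
    (isUnit_of_forall_le_norm ha (hlow · 1)) (hdiag_lt 0) (hdiag_lt 1) hκ hκ_lt Qb
  obtain ⟨N, hN⟩ := (Set.finite_range fun p : Fin 2 × Fin 3 ↦ ‖c p.1 p.2‖).bddAbove
  refine ⟨fun n ↦ c.map (· n), d, max N ‖d‖, fun n i j ↦ ?_, fun n ↦ ?_, fun n ↦ ?_⟩
  · exact ((c i j).norm_coe_le_norm n).trans (le_max_of_le_left (hN ⟨(i, j), rfl⟩))
  · exact (d.norm_coe_le_norm n).trans (le_max_right _ _)
  · ext i j
    have h := DFunLike.congr_fun (congrFun₂ hcd i j) n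
    fin_cases i <;> fin_cases j <;>
      simpa [Matrix.mul_apply, Fin.sum_univ_succ, symSq, Matrix.single, Ab, Qb, S] using h

end Homological

section ConjugationError

/-- A map which vanishes at the origin and whose difference quotient between `u` and `v` is at most
`M * (‖u‖ + ‖v‖)`. This is the only feature of homogeneous quadratic maps used to control the
conjugation error. -/
def QuadraticallyLipschitz {E G : Type*} [NormedAddCommGroup E] [NormedAddCommGroup G] (M : ℝ)
    (q : E → G) : Prop :=
  q 0 = 0 ∧ ∀ u v, ‖q u - q v‖ ≤ M * (‖u‖ + ‖v‖) * ‖u - v‖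

theorem QuadraticallyLipschitz.norm_le {E G : Type*} [NormedAddCommGroup E] [NormedAddCommGroup G]
    {M : ℝ} {q : E → G} (hq : QuadraticallyLipschitz M q) (z : E) : ‖q z‖ ≤ M * ‖z‖ ^ 2 := by
  simpa [hq.1, mul_assoc, sq] using hq.2 z 0

/- With `w = F z`, `L = F'(0)` and `q` the quadratic Taylor term of `F`, the hypothesis `hom` says
that `L + g` after `id + c` and `id + c'` after `F` agree to second order; their difference is
`(g (z + c z) - g z) - (w - (L z + q z)) - (c' w - c' (L z))`. -/
theorem norm_conjugation_error_le {𝕜 E : Type*} [NormedField 𝕜] [NormedAddCommGroup E]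
    [NormedSpace 𝕜 E] {L : E →L[𝕜] E} {c c' g q : E → E} {M K : ℝ} {z w : E} (hM : 0 ≤ M)
    (hK : 0 ≤ K) (hc : QuadraticallyLipschitz M c) (hc' : QuadraticallyLipschitz M c')
    (hg : QuadraticallyLipschitz M g) (hq : QuadraticallyLipschitz M q)
    (hom : L (c z) + g z = q z + c' (L z)) (hz : ‖z‖ ≤ 1) (hw : ‖w‖ ≤ ‖z‖) (hLz : ‖L z‖ ≤ ‖z‖)
    (htaylor : ‖w - (L z + q z)‖ ≤ K * ‖z‖ ^ 3) :
    ‖(L (z + c z) + g (z + c z)) - (w + c' w)‖ ≤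
      (M ^ 2 * (2 + M) + K + 2 * M * (K + M)) * ‖z‖ ^ 3 := by
  have hcz := hc.norm_le z
  have hzz : ‖z‖ ^ 2 ≤ ‖z‖ := by nlinarith [norm_nonneg z]
  have hzzz : ‖z‖ ^ 3 ≤ ‖z‖ ^ 2 := pow_le_pow_of_le_one (norm_nonneg z) hz (by norm_num)
  have hg_err : ‖g (z + c z) - g z‖ ≤ M ^ 2 * (2 + M) * ‖z‖ ^ 3 :=
    calc ‖g (z + c z) - g z‖ ≤ M * (‖z + c z‖ + ‖z‖) * ‖z + c z - z‖ := hg.2 _ _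
      _ ≤ M * (‖z‖ + M * ‖z‖ + ‖z‖) * (M * ‖z‖ ^ 2) := by
          rw [add_sub_cancel_left]
          gcongr
          exact norm_add_le_of_le le_rfl (hcz.trans (by gcongr))
      _ = M ^ 2 * (2 + M) * ‖z‖ ^ 3 := by ring
  have hwL : ‖w - L z‖ ≤ (K + M) * ‖z‖ ^ 2 :=
    calc ‖w - L z‖ = ‖(w - (L z + q z)) + q z‖ := by congr 1; abel
      _ ≤ K * ‖z‖ ^ 3 + M * ‖z‖ ^ 2 := norm_add_le_of_le htaylor (hq.norm_le z)
      _ ≤ K * ‖z‖ ^ 2 + M * ‖z‖ ^ 2 := by gcongr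
      _ = (K + M) * ‖z‖ ^ 2 := by ring
  have hc'_err : ‖c' w - c' (L z)‖ ≤ 2 * M * (K + M) * ‖z‖ ^ 3 :=
    calc ‖c' w - c' (L z)‖ ≤ M * (‖w‖ + ‖L z‖) * ‖w - L z‖ := hc'.2 _ _
      _ ≤ M * (‖z‖ + ‖z‖) * ((K + M) * ‖z‖ ^ 2) := by gcongr
      _ = 2 * M * (K + M) * ‖z‖ ^ 3 := by ring
  calc ‖(L (z + c z) + g (z + c z)) - (w + c' w)‖
      = ‖(g (z + c z) - g z) - (w - (L z + q z)) - (c' w - c' (L z))‖ := by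
        congr 1
        rw [map_add, eq_sub_of_add_eq hom]
        abel
    _ ≤ M ^ 2 * (2 + M) * ‖z‖ ^ 3 + K * ‖z‖ ^ 3 + 2 * M * (K + M) * ‖z‖ ^ 3 :=
        norm_sub_le_of_le (norm_sub_le_of_le hg_err htaylor) hc'_err
    _ = (M ^ 2 * (2 + M) + K + 2 * M * (K + M)) * ‖z‖ ^ 3 := by ring

end ConjugationError

section QuadraticMaps

open Matrix

/-- The homogeneous quadratic self-map of `ℂ²` whose coefficients with respect to `quadMonomials`
are the rows of `c`. -/
def quadPart (c : Matrix (Fin 2) (Fin 3) ℂ) (z : Ck 2) : Ck 2 :=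
  WithLp.toLp 2 (c *ᵥ quadMonomials z)

variable {c : Matrix (Fin 2) (Fin 3) ℂ}

theorem quadPart_add (c c' : Matrix (Fin 2) (Fin 3) ℂ) (z : Ck 2) :
    quadPart (c + c') z = quadPart c z + quadPart c' z := by
  simp [quadPart, add_mulVec]

theorem toEuclideanCLM_quadPart (A : Matrix (Fin 2) (Fin 2) ℂ) (z : Ck 2) :
    toEuclideanCLM (𝕜 := ℂ) A (quadPart c z) = quadPart (A * c) z := by
  simp [quadPart, toEuclideanCLM_toLp]

theorem quadPart_toEuclideanCLM (A : Matrix (Fin 2) (Fin 2) ℂ) (z : Ck 2) :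
    quadPart c (toEuclideanCLM (𝕜 := ℂ) A z) = quadPart (c * symSq A) z := by
  rw [quadPart, quadPart, ofLp_toEuclideanCLM, quadMonomials_mulVec, mulVec_mulVec]

theorem quadMap_eq_add_quadPart (c : Matrix (Fin 2) (Fin 3) ℂ) (z : Ck 2) :
    quadMap (c 0 0) (c 0 1) (c 0 2) (c 1 0) (c 1 1) (c 1 2) z = z + quadPart c z := by
  ext i
  fin_cases i <;>
    simp [quadMap, mk2, quadPart, quadMonomials, mulVec, dotProduct, Fin.sum_univ_succ, add_assoc]

theorem lowerG_eq_add_quadPart {A : Matrix (Fin 2) (Fin 2) ℂ} (hA : A 0 1 = 0) (d : ℂ) (z : Ck 2) :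
    lowerG (A 0 0) (A 1 1) (A 1 0) d z =
      toEuclideanCLM (𝕜 := ℂ) A z + quadPart (single 1 2 d) z := by
  ext i
  fin_cases i <;>
    simp [lowerG, mk2, quadPart, quadMonomials, ofLp_toEuclideanCLM, hA, single_mulVec,
      add_comm (A 1 0 * _)]

theorem norm_quadMonomials_sub_le (u v : Ck 2) (k : Fin 3) :
    ‖quadMonomials u k - quadMonomials v k‖ ≤ (‖u‖ + ‖v‖) * ‖u - v‖ := by
  have hprod : ∀ i j, ‖u i * u j - v i * v j‖ ≤ (‖u‖ + ‖v‖) * ‖u - v‖ := fun i j ↦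
    calc ‖u i * u j - v i * v j‖ = ‖u i * (u - v) j + (u - v) i * v j‖ := by
          congr 1
          simp only [PiLp.sub_apply]
          ring
      _ ≤ ‖u‖ * ‖u - v‖ + ‖u - v‖ * ‖v‖ := by
          refine norm_add_le_of_le ?_ ?_ <;> rw [norm_mul] <;> gcongr <;>
            exact PiLp.norm_apply_le _ _
      _ = (‖u‖ + ‖v‖) * ‖u - v‖ := by ring
  fin_cases k
  · simpa [quadMonomials, sq] using hprod 1 1
  · simpa [quadMonomials] using hprod 0 1
  · simpa [quadMonomials, sq] using hprod 0 0

theorem norm_le_sum_norm_apply {𝕜 ι : Type*} [RCLike 𝕜] [Fintype ι] (x : EuclideanSpace 𝕜 ι) :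
    ‖x‖ ≤ ∑ i, ‖x i‖ := by
  classical
  calc ‖x‖ = ‖∑ i, x i • EuclideanSpace.basisFun ι 𝕜 i‖ := by
        conv_lhs => rw [← (EuclideanSpace.basisFun ι 𝕜).sum_repr x]
        simp
    _ ≤ ∑ i, ‖x i‖ := norm_sum_le_of_le _ fun i _ ↦ by simp [norm_smul]

theorem quadraticallyLipschitz_quadPart {M : ℝ} (hc : ∀ i j, ‖c i j‖ ≤ M) :
    QuadraticallyLipschitz (6 * M) (quadPart c) := by
  refine ⟨by ext i; simp [quadPart, quadMonomials, mulVec, dotProduct, Fin.sum_univ_succ], ?_⟩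
  intro u v
  have hM : 0 ≤ M := (norm_nonneg _).trans (hc 0 0)
  have hentry : ∀ i, ‖(quadPart c u - quadPart c v) i‖ ≤
      3 * (M * ((‖u‖ + ‖v‖) * ‖u - v‖)) := fun i ↦
    calc ‖(quadPart c u - quadPart c v) i‖
        = ‖∑ k, c i k * (quadMonomials u k - quadMonomials v k)‖ := by
          simp [quadPart, mulVec, dotProduct, mul_sub]
      _ ≤ ∑ _k : Fin 3, M * ((‖u‖ + ‖v‖) * ‖u - v‖) := by
          refine norm_sum_le_of_le _ fun k _ ↦ ?_
          rw [norm_mul]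
          gcongr
          · exact hc i k
          · exact norm_quadMonomials_sub_le u v k
      _ = 3 * (M * ((‖u‖ + ‖v‖) * ‖u - v‖)) := by simp
  calc ‖quadPart c u - quadPart c v‖ ≤ ∑ i, ‖(quadPart c u - quadPart c v) i‖ :=
        norm_le_sum_norm_apply _
    _ ≤ 6 * M * (‖u‖ + ‖v‖) * ‖u - v‖ := by
        rw [Fin.sum_univ_two]
        linarith [hentry 0, hentry 1]

theorem exists_quadPart_eq_bilinear (B : Ck 2 →L[ℂ] Ck 2 →L[ℂ] Ck 2) :
    ∃ c : Matrix (Fin 2) (Fin 3) ℂ, (∀ i j, ‖c i j‖ ≤ 2 * ‖B‖) ∧ ∀ z, quadPart c z = B z z := by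
  let e : Fin 2 → Ck 2 := fun k ↦ EuclideanSpace.single k 1
  have hB : ∀ i k l, ‖B (e k) (e l) i‖ ≤ ‖B‖ := fun i k l ↦
    calc ‖B (e k) (e l) i‖ ≤ ‖B (e k) (e l)‖ := PiLp.norm_apply_le _ i
      _ ≤ ‖B‖ * ‖e k‖ * ‖e l‖ := B.le_opNorm₂ _ _
      _ = ‖B‖ := by simp [e]
  refine ⟨.of fun i ↦ ![B (e 1) (e 1) i, B (e 0) (e 1) i + B (e 1) (e 0) i, B (e 0) (e 0) i],
    fun i j ↦ ?_, fun z ↦ ?_⟩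
  · fin_cases j
    · simpa using (hB i 1 1).trans (by linarith [norm_nonneg B])
    · simpa [two_mul] using norm_add_le_of_le (hB i 0 1) (hB i 1 0)
    · simpa using (hB i 0 0).trans (by linarith [norm_nonneg B])
  · have hz : z = z 0 • e 0 + z 1 • e 1 := by
      ext i
      fin_cases i <;> simp [e]
    ext i
    conv_rhs => rw [hz]
    simp [quadPart, quadMonomials]
    ring

end QuadraticMaps

section Attracting

open Matrix

variable {F : Ck 2 → Ck 2}

theorem exists_quadPart_taylor {R M : ℝ} (hR : 0 < R) (hF : DifferentiableOn ℂ F (ball 0 R))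
    (hM : ∀ z ∈ ball 0 R, ‖F z‖ ≤ M) (h0 : F 0 = 0) :
    ∃ Q : Matrix (Fin 2) (Fin 3) ℂ, (∀ i j, ‖Q i j‖ ≤ 16 * M / R ^ 2) ∧ ∀ z ∈ ball 0 R,
      ‖F z - (fderiv ℂ F 0 z + quadPart Q z)‖ ≤ 12 * M * (‖z‖ / R) ^ 3 := by
  obtain ⟨Q, hQ, hQB⟩ :=
    exists_quadPart_eq_bilinear ((2⁻¹ : ℂ) • fderiv ℂ (fderiv ℂ F) 0)
  refine ⟨Q, fun i j ↦ (hQ i j).trans ?_, fun z hz ↦ ?_⟩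
  · calc 2 * ‖(2⁻¹ : ℂ) • fderiv ℂ (fderiv ℂ F) 0‖
        ≤ 2 * (‖(2⁻¹ : ℂ)‖ * ‖fderiv ℂ (fderiv ℂ F) 0‖) := by
          gcongr
          exact ContinuousLinearMap.opNorm_smul_le _ _
      _ = ‖fderiv ℂ (fderiv ℂ F) 0‖ := by simp
      _ ≤ 16 * M / R ^ 2 := norm_fderiv_fderiv_le_of_norm_le_on_ball hR hF hM
  · simpa [h0, hQB] using norm_sub_taylor_two_le hF hM hz

theorem toEuclideanCLM_derivMatrix (F : Ck 2 → Ck 2) :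
    toEuclideanCLM (𝕜 := ℂ) (derivMatrix F) = fderiv ℂ F 0 := by
  refine ContinuousLinearMap.coe_injective ((EuclideanSpace.basisFun (Fin 2) ℂ).toBasis.ext ?_)
  intro j
  ext i
  simp [derivMatrix, ofLp_toEuclideanCLM]

theorem norm_derivMatrix_apply_le (F : Ck 2 → Ck 2) (i j : Fin 2) :
    ‖derivMatrix F i j‖ ≤ ‖fderiv ℂ F 0‖ :=
  calc ‖derivMatrix F i j‖ ≤ ‖fderiv ℂ F 0 (EuclideanSpace.single j 1)‖ := PiLp.norm_apply_le _ i
    _ ≤ ‖fderiv ℂ F 0‖ := by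
        simpa using (fderiv ℂ F 0).le_opNorm (EuclideanSpace.single j 1)

theorem le_norm_derivMatrix_one_one {a : ℝ} (hF : DifferentiableAt ℂ F 0) (h0 : F 0 = 0)
    (htri : LowerTriAtZero F) (hlow : ∀ᶠ z in 𝓝 0, a * ‖z‖ ≤ ‖F z‖) :
    a ≤ ‖derivMatrix F 1 1‖ := by
  have hcol : fderiv ℂ F 0 (EuclideanSpace.single 1 1) =
      EuclideanSpace.single 1 (derivMatrix F 1 1) := by
    ext i
    fin_cases i
    · simpa [derivMatrix] using htri 0 1 zero_lt_one
    · simp [derivMatrix]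
  simpa [hcol] using
    norm_le_norm_apply_of_hasFDerivAt hF.hasFDerivAt h0 hlow (EuclideanSpace.single 1 1)

theorem norm_diag_mem_Icc {𝕜 : Type*} [NormedField 𝕜] {A : Matrix (Fin 2) (Fin 2) 𝕜} {a ξ : ℝ}
    (ha : 0 < a) (hξ : ξ < 1) (hmu : a ≤ ‖A 1 1‖)
    (hres : ∀ l j i : Fin 2, l ≤ j → ‖A i i‖ * ‖A j j‖ ≤ ξ * ‖A l l‖) (i : Fin 2) :
    ‖A i i‖ ∈ Set.Icc (a ^ 2) ξ := by
  have hmu_sq : a ^ 2 ≤ ‖A 1 1‖ * ‖A 1 1‖ := by rw [sq]; gcongr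
  have hlow : ∀ l, a ^ 2 ≤ ‖A l l‖ := fun l ↦
    calc a ^ 2 ≤ ξ * ‖A l l‖ := hmu_sq.trans (hres l 1 1 (Fin.le_last l))
      _ ≤ ‖A l l‖ := mul_le_of_le_one_left (norm_nonneg _) hξ.le
  have hpos : 0 < ‖A 0 0‖ := (pow_pos ha 2).trans_le (hlow 0)
  exact ⟨hlow i, le_of_mul_le_mul_right (hres 0 0 i le_rfl) hpos⟩

theorem norm_lowerG_quadMap_sub_le {c c' Q : Matrix (Fin 2) (Fin 3) ℂ} {d : ℂ} {M K : ℝ} {z : Ck 2}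
    (htri : LowerTriAtZero F) (hL : ‖fderiv ℂ F 0‖ ≤ 1) (hc : ∀ i j, ‖c i j‖ ≤ M)
    (hc' : ∀ i j, ‖c' i j‖ ≤ M) (hd : ‖d‖ ≤ M) (hQ : ∀ i j, ‖Q i j‖ ≤ M) (hK : 0 ≤ K)
    (hom : derivMatrix F * c + single 1 2 d = Q + c' * symSq (derivMatrix F)) (hz : ‖z‖ ≤ 1)
    (hFz : ‖F z‖ ≤ ‖z‖) (htaylor : ‖F z - (fderiv ℂ F 0 z + quadPart Q z)‖ ≤ K * ‖z‖ ^ 3) :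
    ‖lowerG (derivMatrix F 0 0) (derivMatrix F 1 1) (derivMatrix F 1 0) d
        (quadMap (c 0 0) (c 0 1) (c 0 2) (c 1 0) (c 1 1) (c 1 2) z) -
      quadMap (c' 0 0) (c' 0 1) (c' 0 2) (c' 1 0) (c' 1 1) (c' 1 2) (F z)‖ ≤
      ((6 * M) ^ 2 * (2 + 6 * M) + K + 2 * (6 * M) * (K + 6 * M)) * ‖z‖ ^ 3 := by
  have hM : 0 ≤ M := (norm_nonneg _).trans hd
  have hsingle : ∀ i j, ‖single (1 : Fin 2) (2 : Fin 3) d i j‖ ≤ M := fun i j ↦ by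
    rw [single_apply]
    split_ifs
    · exact hd
    · simpa using hM
  have hom_apply : fderiv ℂ F 0 (quadPart c z) + quadPart (single 1 2 d) z =
      quadPart Q z + quadPart c' (fderiv ℂ F 0 z) := by
    rw [← toEuclideanCLM_derivMatrix, toEuclideanCLM_quadPart, quadPart_toEuclideanCLM,
      ← quadPart_add, ← quadPart_add, hom]
  rw [lowerG_eq_add_quadPart (htri 0 1 zero_lt_one), quadMap_eq_add_quadPart,
    quadMap_eq_add_quadPart, toEuclideanCLM_derivMatrix]
  exact norm_conjugation_error_le (by positivity) hK (quadraticallyLipschitz_quadPart hc)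
    (quadraticallyLipschitz_quadPart hc') (quadraticallyLipschitz_quadPart hsingle)
    (quadraticallyLipschitz_quadPart hQ) hom_apply hz hFz
    (by simpa using (fderiv ℂ F 0).le_of_opNorm_le hL z) htaylor

end Attracting

namespace UniformlyAttracting

variable {F : ℕ → Ck 2 → Ck 2}

theorem norm_apply_le (hua : UniformlyAttracting F) (n : ℕ) {z : Ck 2} (hz : z ∈ ball 0 1) :
    ‖F n z‖ ≤ ‖z‖ := by
  obtain ⟨a, b, -, -, hb, hbound, -⟩ := hua
  exact (hbound n z hz).2.trans (mul_le_of_le_one_left (norm_nonneg z) hb.le)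

theorem apply_zero (hua : UniformlyAttracting F) (n : ℕ) : F n 0 = 0 := by
  simpa using hua.norm_apply_le n (mem_ball_self one_pos)

theorem norm_fderiv_zero_le_one (hua : UniformlyAttracting F) {n : ℕ}
    (hF : DifferentiableAt ℂ (F n) 0) : ‖fderiv ℂ (F n) 0‖ ≤ 1 :=
  hF.hasFDerivAt.le_of_lip' zero_le_one <| eventually_of_mem (ball_mem_nhds 0 one_pos)
    fun z hz ↦ by simpa [hua.apply_zero n] using hua.norm_apply_le n hz

protected theorem exists_bounded_homological_solution (hua : UniformlyAttracting F)
    (hF : ∀ n, DifferentiableAt ℂ (F n) 0) (htri : ∀ n, LowerTriAtZero (F n))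
    {Q : ℕ → Matrix (Fin 2) (Fin 3) ℂ} {K : ℝ} (hQ : ∀ n i j, ‖Q n i j‖ ≤ K) :
    ∃ (c : ℕ → Matrix (Fin 2) (Fin 3) ℂ) (d : ℕ → ℂ) (N : ℝ),
      (∀ n i j, ‖c n i j‖ ≤ N) ∧ (∀ n, ‖d n‖ ≤ N) ∧ ∀ n, derivMatrix (F n) * c n +
        Matrix.single 1 2 (d n) = Q n + c (n + 1) * symSq (derivMatrix (F n)) := by
  have ⟨a, _, ha, _, _, hbound, ξ, hξ, hres⟩ := hua
  have hmu : ∀ n, a ≤ ‖derivMatrix (F n) 1 1‖ := fun n ↦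
    le_norm_derivMatrix_one_one (hF n) (hua.apply_zero n) (htri n) <|
      eventually_of_mem (ball_mem_nhds 0 one_pos) fun z hz ↦ (hbound n z hz).1
  have hdiag n := norm_diag_mem_Icc ha hξ (hmu n) (hres n)
  exact exists_bounded_homological_solution (pow_pos ha 2) hξ
    (fun n ↦ htri n 0 1 zero_lt_one)
    (fun n i j ↦ (norm_derivMatrix_apply_le _ i j).trans (hua.norm_fderiv_zero_le_one (hF n)))
    (fun n i ↦ (hdiag n i).1) (fun n i ↦ (hdiag n i).2)
    (fun n ↦ by simpa only [sq] using hres n 0 1 1 zero_le_one) hQ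

end UniformlyAttracting

theorem degree_two_bounded_conjugation_general (F : ℕ → Ck 2 → Ck 2)
    (hF : ∀ n, DifferentiableOn ℂ (F n) (ball 0 1)) (htri : ∀ n, LowerTriAtZero (F n))
    (hua : UniformlyAttracting F) :
    ∃ (dc : ℕ → ℂ) (Md : ℝ), (∀ n, ‖dc n‖ ≤ Md) ∧
    ∃ C : ℝ, 0 < C ∧
    ∃ (al be ga de ep ze : ℕ → ℂ) (MX : ℝ),
      (∀ n, ‖al n‖ ≤ MX ∧ ‖be n‖ ≤ MX ∧ ‖ga n‖ ≤ MX ∧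
            ‖de n‖ ≤ MX ∧ ‖ep n‖ ≤ MX ∧ ‖ze n‖ ≤ MX) ∧
      ∀ n, ∀ z ∈ ball (0 : Ck 2) 1,
        ‖lowerG (derivMatrix (F n) 0 0) (derivMatrix (F n) 1 1) (derivMatrix (F n) 1 0) (dc n)
            (quadMap (al n) (be n) (ga n) (de n) (ep n) (ze n) z)
          - quadMap (al (n+1)) (be (n+1)) (ga (n+1)) (de (n+1)) (ep (n+1)) (ze (n+1))
            (F n z)‖ ≤ C * ‖z‖ ^ 3 := by
  choose Q hQ htaylor using fun n ↦ exists_quadPart_taylor one_pos (hF n)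
    (fun z hz ↦ (hua.norm_apply_le n hz).trans (mem_ball_zero_iff.1 hz).le) (hua.apply_zero n)
  have hdiff : ∀ n, DifferentiableAt ℂ (F n) 0 := fun n ↦
    (hF n).differentiableAt (ball_mem_nhds 0 one_pos)
  obtain ⟨c, d, N, hc, hd, hom⟩ := hua.exists_bounded_homological_solution hdiff htri hQ
  set M : ℝ := max N (16 * 1 / 1 ^ 2)
  have hNM : N ≤ M := le_max_left _ _
  have : 0 < M := lt_max_of_lt_right (by norm_num)
  refine ⟨d, N, hd, (6 * M) ^ 2 * (2 + 6 * M) + 12 + 2 * (6 * M) * (12 + 6 * M), by positivity,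
    (c · 0 0), (c · 0 1), (c · 0 2), (c · 1 0), (c · 1 1), (c · 1 2), N,
    fun n ↦ ⟨hc n 0 0, hc n 0 1, hc n 0 2, hc n 1 0, hc n 1 1, hc n 1 2⟩, fun n z hz ↦ ?_⟩
  exact norm_lowerG_quadMap_sub_le (htri n) (hua.norm_fderiv_zero_le_one (hdiff n))
    (fun i j ↦ (hc n i j).trans hNM) (fun i j ↦ (hc (n + 1) i j).trans hNM) ((hd n).trans hNM)
    (fun i j ↦ (hQ n i j).trans (le_max_right _ _)) (by norm_num) (hom n)
    (mem_ball_zero_iff.1 hz).le (hua.norm_apply_le n hz) (by simpa using htaylor n z hz)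

/-- **Degree 2 polynomials in ℂ².** For a uniformly attracting sequence of correctly ordered
automorphisms `F_n(x,y) = (λ_n x, μ_n y + a_n x) + h.o.t.` of `ℂ²` there are a bounded sequence
`d_n`, a constant `C > 0`, and quadratic maps `X_n = id + (quadratic terms)` with uniformly
bounded coefficients, such that with `G_n(x,y) = (λ_n x, μ_n y + a_n x + d_n x²)` one has
`‖G_n(X_{n-1}(z)) - X_n(F_n(z))‖ ≤ C‖z‖³` on the unit ball (indices shifted so that `X n`
plays the role of `X_{n-1}` for the `n`-th map). -/
theorem degree_two_bounded_conjugation (F : ℕ → Ck 2 → Ck 2)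
    (hauto : ∀ n, IsAutomorphism (F n)) (hfix : ∀ n, F n 0 = 0)
    (hord : ∀ n, CorrectlyOrdered (F n)) (hua : UniformlyAttracting F) :
    ∃ (dc : ℕ → ℂ) (Md : ℝ), (∀ n, ‖dc n‖ ≤ Md) ∧
    ∃ C : ℝ, 0 < C ∧
    ∃ (al be ga de ep ze : ℕ → ℂ) (MX : ℝ),
      (∀ n, ‖al n‖ ≤ MX ∧ ‖be n‖ ≤ MX ∧ ‖ga n‖ ≤ MX ∧
            ‖de n‖ ≤ MX ∧ ‖ep n‖ ≤ MX ∧ ‖ze n‖ ≤ MX) ∧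
      ∀ n, ∀ z ∈ ball (0 : Ck 2) 1,
        ‖lowerG (derivMatrix (F n) 0 0) (derivMatrix (F n) 1 1) (derivMatrix (F n) 1 0) (dc n)
            (quadMap (al n) (be n) (ga n) (de n) (ep n) (ze n) z)
          - quadMap (al (n+1)) (be (n+1)) (ga (n+1)) (de (n+1)) (ep (n+1)) (ze (n+1))
            (F n z)‖ ≤ C * ‖z‖ ^ 3 :=
  degree_two_bounded_conjugation_general F (fun n ↦ (hauto n).1.differentiableOn)
    (fun n ↦ (hord n).1) hua
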